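/- Let F be an expanding 3-satisfiable weighted CNF formula. Then there exists a truth assignment tau with sat_tau(F) >= (2/3) w(F) + (2/453) |V(F)|. -/

import Mathlib

open Classical

/-- A clause: a finite set of literals, each a (variable, polarity) pair. -/
abbrev Clause := Finset (ℕ × Bool)

/-- A truth assignment satisfies a clause if some literal evaluates to true. -/
def SatC (τ : ℕ → Bool) (C : Clause) : Prop := ∃ l ∈ C, τ l.1 = l.2

/-- A CNF formula: clauses are nonempty and contain no variable together with its negation. -/
def IsCNF (F : Finset Clause) : Prop :=
  ∀ C ∈ F, C.Nonempty ∧ ∀ v : ℕ, ¬((v, true) ∈ C ∧ (v, false) ∈ C)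

/-- Total weight of a set of clauses. -/
def wt (w : Clause → ℕ) (G : Finset Clause) : ℕ := ∑ C ∈ G, w C

/-- Total weight of the clauses of `G` satisfied by `τ`. -/
noncomputable def satWt (w : Clause → ℕ) (τ : ℕ → Bool) (G : Finset Clause) : ℕ :=
  ∑ C ∈ G.filter (fun C => SatC τ C), w C

/-- `F` is 2-satisfiable. -/
def Sat2 (F : Finset Clause) : Prop :=
  ∀ C1 ∈ F, ∀ C2 ∈ F, ∃ τ, SatC τ C1 ∧ SatC τ C2

/-- `F` is 3-satisfiable. -/
def Sat3 (F : Finset Clause) : Prop :=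
  ∀ C1 ∈ F, ∀ C2 ∈ F, ∀ C3 ∈ F, ∃ τ, SatC τ C1 ∧ SatC τ C2 ∧ SatC τ C3

/-- The set of variables of a formula. -/
def vars (F : Finset Clause) : Finset ℕ := F.sup (fun C => C.image Prod.fst)

/-- The set of clauses of `F` containing a variable of `U`. -/
noncomputable def FU (F : Finset Clause) (U : Finset ℕ) : Finset Clause :=
  F.filter (fun C => ∃ l ∈ C, l.1 ∈ U)

/-- Unit variables: variables occurring in unit clauses. -/
def unitVars (F : Finset Clause) : Finset ℕ :=
  (F.filter (fun C => C.card = 1)).sup (fun C => C.image Prod.fst)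

/-- All unit clauses of `F` are positive. -/
def UnitPos (F : Finset Clause) : Prop :=
  ∀ C ∈ F, C.card = 1 → ∃ x, C = {(x, true)}

/-- A hard clause: a positive unit clause, or a two-literal clause `{¬x, y}` / `{¬x, ¬y}`
with `x` a unit variable and `y` not a unit variable. -/
def IsHard (F : Finset Clause) (C : Clause) : Prop :=
  (∃ x, C = {(x, true)}) ∨
  (∃ x ∈ unitVars F, ∃ y ∉ unitVars F, ∃ b : Bool, C = {(x, false), (y, b)})

/-- The soft (non-hard) clauses of `F`. -/
noncomputable def softF (F : Finset Clause) : Finset Clause :=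
  F.filter (fun C => ¬ IsHard F C)

/-- Two-literal hard clauses. -/
noncomputable def F2set (F : Finset Clause) : Finset Clause :=
  F.filter (fun C => ∃ x ∈ unitVars F, ∃ y ∉ unitVars F, ∃ b : Bool, C = {(x, false), (y, b)})

/-- Non-unit variables occurring in two-literal hard clauses. -/
noncomputable def V2set (F : Finset Clause) : Finset ℕ :=
  ((F2set F).sup (fun C => C.image Prod.fst)) \ unitVars F

/-- `F` is a hard formula: every clause is hard. -/
def HardFormula (F : Finset Clause) : Prop := ∀ C ∈ F, IsHard F C

/-- `F` is expanding: every set `X` of variables is covered by clauses of total weight at least `|X|`. -/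
def Expanding (F : Finset Clause) (w : Clause → ℕ) : Prop :=
  ∀ X ⊆ vars F, X.card ≤ wt w (FU F X)

/-- Extend an assignment on the variables of `F` to all of `ℕ`. -/
noncomputable def extAssign (F : Finset Clause) (α : {v // v ∈ vars F} → Bool) : ℕ → Bool :=
  fun n => if h : n ∈ vars F then α ⟨n, h⟩ else false

/-- The probability that the random assignment (unit variables true with probability 2/3,
other variables true with probability 1/2, independently) satisfies the clause `C`. -/
noncomputable def probSat (F : Finset Clause) (C : Clause) : ℝ :=
  ∑ α : {v // v ∈ vars F} → Bool,
    (∏ v : {v // v ∈ vars F},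
      (if (v : ℕ) ∈ unitVars F then (if α v then (2:ℝ)/3 else 1/3) else 1/2)) *
    (if SatC (extAssign F α) C then 1 else 0)

/-- The average of `f` over all subsets of `V`. -/
noncomputable def avg (V : Finset ℕ) (f : Finset ℕ → ℝ) : ℝ :=
  (∑ A ∈ V.powerset, f A) / 2 ^ V.card

lemma avg_const (V : Finset ℕ) (c : ℝ) : avg V (fun _ => c) = c := by
  simp [avg, Finset.card_powerset]

lemma avg_add (V : Finset ℕ) (f g : Finset ℕ → ℝ) :
    avg V (fun A => f A + g A) = avg V f + avg V g := by
  simp only [avg, Finset.sum_add_distrib, add_div]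

lemma avg_mul_left (V : Finset ℕ) (c : ℝ) (f : Finset ℕ → ℝ) :
    avg V (fun A => c * f A) = c * avg V f := by
  simp only [avg, ← Finset.mul_sum, mul_div_assoc]

lemma avg_sum {ι : Type*} (V : Finset ℕ) (s : Finset ι) (f : ι → Finset ℕ → ℝ) :
    avg V (fun A => ∑ i ∈ s, f i A) = ∑ i ∈ s, avg V (f i) := by
  simp only [avg]
  rw [Finset.sum_comm, Finset.sum_div]

lemma avg_mono (V : Finset ℕ) {f g : Finset ℕ → ℝ} (h : ∀ A, f A ≤ g A) :
    avg V f ≤ avg V g := by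
  unfold avg
  gcongr with A
  exact h A

lemma avg_split {V : Finset ℕ} {v : ℕ} (hv : v ∈ V) (f : Finset ℕ → ℝ) :
    avg V f = avg (V.erase v) (fun A => (f (A.erase v) + f (insert v A)) / 2) := by
  have h1 : V.card = (V.erase v).card + 1 := (Finset.card_erase_add_one hv).symm
  have h2 : ∑ A ∈ (V.erase v).powerset, f (A.erase v) = ∑ A ∈ (V.erase v).powerset, f A := by
    refine Finset.sum_congr rfl fun A hA => ?_
    rw [Finset.erase_eq_of_notMem]
    exact fun h => Finset.notMem_erase v V (Finset.mem_powerset.1 hA h)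
  unfold avg
  conv_lhs => rw [← Finset.insert_erase hv,
    Finset.sum_powerset_insert (Finset.notMem_erase v V), Finset.insert_erase hv]
  rw [← Finset.sum_div, Finset.sum_add_distrib, h2, h1, pow_succ]
  ring

lemma avg_coin {V : Finset ℕ} {v : ℕ} (hv : v ∈ V) (a b : ℝ) :
    avg V (fun A => if v ∈ A then a else b) = (a + b) / 2 := by
  rw [avg_split hv]
  simp [avg_const, add_comm]

/-- If toggling one element always changes `f` by at least `c`, then `|f|` is on average at least
`c / 2`. -/
lemma le_avg_abs {V : Finset ℕ} {v : ℕ} (hv : v ∈ V) (f : Finset ℕ → ℝ) (c : ℝ)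
    (h : ∀ A, c ≤ |f (A.erase v) - f (insert v A)|) : c / 2 ≤ avg V (fun A => |f A|) := by
  rw [avg_split hv, ← avg_const (V.erase v) (c / 2)]
  refine avg_mono _ fun A => ?_
  have := (h A).trans (abs_sub _ _)
  linarith

lemma avg_prod (V : Finset ℕ) (C : Clause) (g : ℕ × Bool → Prop → ℝ)
    (hV : ∀ l ∈ C, l.1 ∈ V) (hC : Set.InjOn Prod.fst (C : Set (ℕ × Bool))) :
    avg V (fun A => ∏ l ∈ C, g l (l.1 ∈ A)) = ∏ l ∈ C, (g l False + g l True) / 2 := by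
  induction C using Finset.induction_on with
  | empty => simp [avg_const]
  | insert l C hl ih =>
    have ih := ih (fun m hm => hV m (Finset.mem_insert_of_mem hm))
      (hC.mono (by simp))
    have hne : ∀ m ∈ C, m.1 ≠ l.1 := fun m hm h => by
      have := hC (by simp [hm]) (by simp) h
      exact hl (this ▸ hm)
    have hlV : l.1 ∈ V := hV l (Finset.mem_insert_self _ _)
    have e1 : ∀ A : Finset ℕ, ∏ m ∈ C, g m (m.1 ∈ A.erase l.1) = ∏ m ∈ C, g m (m.1 ∈ A) :=
      fun A => Finset.prod_congr rfl fun m hm => by simp [hne m hm]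
    have e2 : ∀ A : Finset ℕ, ∏ m ∈ C, g m (m.1 ∈ insert l.1 A) = ∏ m ∈ C, g m (m.1 ∈ A) :=
      fun A => Finset.prod_congr rfl fun m hm => by simp [hne m hm]
    rw [Finset.prod_insert hl, ← ih, avg_split hlV, avg_split hlV, ← avg_mul_left]
    congr 1
    ext A
    rw [Finset.prod_insert hl, Finset.prod_insert hl, e1, e2]
    simp
    ring

/-- The probability that a literal is false when variable `v` equals `π v` with probability `p v`. -/
noncomputable def litFail (π : ℕ → Bool) (p : ℕ → ℝ) (l : ℕ × Bool) : ℝ :=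
  if l.2 = π l.1 then 1 - p l.1 else p l.1

/-- The expected weight of falsified clauses when each variable `v` independently equals `π v` with
probability `p v`. -/
noncomputable def loss (F : Finset Clause) (w : Clause → ℕ) (π : ℕ → Bool) (p : ℕ → ℝ) : ℝ :=
  ∑ C ∈ F, (w C : ℝ) * ∏ l ∈ C, litFail π p l

lemma litFail_mem {π : ℕ → Bool} {p : ℕ → ℝ} {l : ℕ × Bool}
    (hp : 0 ≤ p l.1 ∧ p l.1 ≤ 1) : 0 ≤ litFail π p l ∧ litFail π p l ≤ 1 := by
  unfold litFail
  split_ifs <;> constructor <;> linarith [hp.1, hp.2]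

lemma IsCNF.injOn_fst {F : Finset Clause} (hF : IsCNF F) {C : Clause} (hC : C ∈ F) :
    Set.InjOn Prod.fst (C : Set (ℕ × Bool)) := by
  rintro ⟨v, b⟩ h1 ⟨v', b'⟩ h2 (rfl : v = v')
  have := (hF C hC).2 v
  cases b <;> cases b' <;> simp_all

lemma prod_litFail_update {C : Clause} (hC : Set.InjOn Prod.fst (C : Set (ℕ × Bool)))
    (π : ℕ → Bool) (p : ℕ → ℝ) (v : ℕ) (t : ℝ) :
    ∏ l ∈ C, litFail π (Function.update p v t) l =
      t * ∏ l ∈ C, litFail π (Function.update p v 1) l +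
        (1 - t) * ∏ l ∈ C, litFail π (Function.update p v 0) l := by
  by_cases h : ∃ l ∈ C, l.1 = v
  · obtain ⟨l, hl, rfl⟩ := h
    have e : ∀ s : ℝ, ∏ m ∈ C.erase l, litFail π (Function.update p l.1 s) m =
        ∏ m ∈ C.erase l, litFail π p m := fun s =>
      Finset.prod_congr rfl fun m hm => by
        have hm' := Finset.mem_erase.1 hm
        have : m.1 ≠ l.1 := fun h => hm'.1 (hC hm'.2 hl h)
        simp [litFail, this]
    simp only [← Finset.mul_prod_erase C _ hl, e]
    simp only [litFail, Function.update_self]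
    split_ifs <;> ring
  · push Not at h
    have e : ∀ s : ℝ, ∏ m ∈ C, litFail π (Function.update p v s) m = ∏ m ∈ C, litFail π p m :=
      fun s => Finset.prod_congr rfl fun m hm => by simp [litFail, h m hm]
    simp only [e]
    ring

lemma loss_update {F : Finset Clause} (hF : IsCNF F) (w : Clause → ℕ) (π : ℕ → Bool)
    (p : ℕ → ℝ) (v : ℕ) (t : ℝ) :
    loss F w π (Function.update p v t) =
      t * loss F w π (Function.update p v 1) + (1 - t) * loss F w π (Function.update p v 0) := by
  simp only [loss, Finset.mul_sum, ← Finset.sum_add_distrib]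
  refine Finset.sum_congr rfl fun C hC => ?_
  rw [prod_litFail_update (hF.injOn_fst hC)]
  ring

lemma exists_integral_loss_le {F : Finset Clause} (hF : IsCNF F) (w : Clause → ℕ) (π : ℕ → Bool)
    (p : ℕ → ℝ) (hp : ∀ v, 0 ≤ p v ∧ p v ≤ 1) (S : Finset ℕ) :
    ∃ q : ℕ → ℝ, (∀ v, 0 ≤ q v ∧ q v ≤ 1) ∧ (∀ v ∈ S, q v = 0 ∨ q v = 1) ∧
      loss F w π q ≤ loss F w π p := by
  induction S using Finset.induction_on with
  | empty => exact ⟨p, hp, by simp, le_rfl⟩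
  | insert v S _ ih =>
    obtain ⟨q, hq, hS, hle⟩ := ih
    have key := loss_update hF w π q v (q v)
    rw [Function.update_eq_self] at key
    obtain ⟨t, ht, hlt⟩ : ∃ t : ℝ, (t = 0 ∨ t = 1) ∧
        loss F w π (Function.update q v t) ≤ loss F w π q := by
      by_contra! hcon
      have h0 := hcon 0 (Or.inl rfl)
      have h1 := hcon 1 (Or.inr rfl)
      rcases (hq v).1.eq_or_lt with h | h
      · rw [← h] at key
        linarith
      · nlinarith [(hq v).2, mul_pos h (sub_pos.2 h1),
          mul_nonneg (sub_nonneg.2 (hq v).2) (sub_pos.2 h0).le]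
    refine ⟨Function.update q v t, fun u => ?_, fun u hu => ?_, hlt.trans hle⟩
    · by_cases huv : u = v
      · subst huv
        rcases ht with rfl | rfl <;> simp
      · simpa [huv] using hq u
    · by_cases huv : u = v
      · subst huv
        simpa using ht
      · simpa [huv] using hS u ((Finset.mem_insert.1 hu).resolve_left huv)

lemma fst_mem_vars {F : Finset Clause} {C : Clause} (hC : C ∈ F) {l : ℕ × Bool} (hl : l ∈ C) :
    l.1 ∈ vars F :=
  Finset.mem_sup.2 ⟨C, hC, Finset.mem_image_of_mem _ hl⟩

lemma exists_satWt_ge {F : Finset Clause} (hF : IsCNF F) (w : Clause → ℕ) (π : ℕ → Bool)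
    (p : ℕ → ℝ) (hp : ∀ v, 0 ≤ p v ∧ p v ≤ 1) :
    ∃ τ : ℕ → Bool, (wt w F : ℝ) - loss F w π p ≤ satWt w τ F := by
  obtain ⟨q, -, hq, hle⟩ := exists_integral_loss_le hF w π p hp (vars F)
  refine ⟨fun v => if q v = 1 then π v else !π v, ?_⟩
  set τ : ℕ → Bool := fun v => if q v = 1 then π v else !π v with hτ
  have hlit : ∀ C ∈ F, ∀ l ∈ C, litFail π q l = if τ l.1 = l.2 then 0 else 1 := by
    intro C hC l hl
    obtain ⟨v, b⟩ := l
    rcases hq v (fst_mem_vars hC hl) with h | h <;>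
      cases b <;> cases hπ : π v <;> simp [litFail, hτ, h, hπ]
  have hloss : (wt w F : ℝ) - satWt w τ F = loss F w π q := by
    have : (satWt w τ F : ℝ) = ∑ C ∈ F, if SatC τ C then (w C : ℝ) else 0 := by
      simp [satWt, Finset.sum_filter]
    rw [this, wt, Nat.cast_sum, ← Finset.sum_sub_distrib, loss]
    refine Finset.sum_congr rfl fun C hC => ?_
    rw [Finset.prod_congr rfl (hlit C hC)]
    by_cases h : SatC τ C
    · obtain ⟨l, hl, hs⟩ := id h
      rw [if_pos h, Finset.prod_eq_zero hl (by simp [hs])]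
      simp
    · rw [if_neg h, Finset.prod_eq_one]
      · simp
      · intro l hl
        rw [if_neg fun hs => h ⟨l, hl, hs⟩]
  linarith

lemma mem_unitVars {F : Finset Clause} {v : ℕ} : v ∈ unitVars F ↔ ∃ b, {(v, b)} ∈ F := by
  simp only [unitVars, Finset.mem_sup, Finset.mem_filter, Finset.card_eq_one, Finset.mem_image]
  constructor
  · rintro ⟨C, ⟨hC, ⟨u, b⟩, rfl⟩, l, hl, rfl⟩
    rw [Finset.mem_singleton.1 hl]
    exact ⟨b, hC⟩
  · rintro ⟨b, hb⟩
    exact ⟨_, ⟨hb, _, rfl⟩, (v, b), by simp, rfl⟩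

lemma unitVars_subset_vars (F : Finset Clause) : unitVars F ⊆ vars F := by
  intro v hv
  obtain ⟨b, hb⟩ := mem_unitVars.1 hv
  exact fst_mem_vars hb (l := (v, b)) (by simp)

/-- The polarity in which a unit variable occurs in its unit clause. -/
noncomputable def pol (F : Finset Clause) (v : ℕ) : Bool := decide ({(v, true)} ∈ F)

lemma unit_pol_mem {F : Finset Clause} {v : ℕ} (hv : v ∈ unitVars F) : {(v, pol F v)} ∈ F := by
  obtain ⟨b, hb⟩ := mem_unitVars.1 hv
  by_cases h : {(v, true)} ∈ F
  · simp [pol, h]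
  · cases b
    · simpa [pol, h] using hb
    · exact absurd hb h

lemma Sat3.unit_not_pol_notMem {F : Finset Clause} (h3 : Sat3 F) {v : ℕ}
    (hv : v ∈ unitVars F) : {(v, !pol F v)} ∉ F := by
  intro h
  obtain ⟨τ, h1, h2, -⟩ := h3 _ (unit_pol_mem hv) _ h _ h
  simp only [SatC, Finset.mem_singleton, exists_eq_left] at h1 h2
  simp [h1] at h2

lemma Sat3.eq_pol {F : Finset Clause} (h3 : Sat3 F) {v : ℕ} {b : Bool} (h : {(v, b)} ∈ F) :
    b = pol F v := by
  by_contra hb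
  have hv := mem_unitVars.2 ⟨b, h⟩
  refine h3.unit_not_pol_notMem hv ?_
  have : b = !pol F v := by cases b <;> cases h : pol F v <;> simp_all
  rwa [← this]

/-- The clause on `x` and `y` falsifying the unit literal of `x`. -/
noncomputable def pairCl (F : Finset Clause) (x y : ℕ) (c : Bool) : Clause :=
  {(x, !pol F x), (y, c)}

lemma Sat3.not_pairCl_both {F : Finset Clause} (h3 : Sat3 F) {x y : ℕ} {c : Bool}
    (hx : x ∈ unitVars F) (h1 : pairCl F x y c ∈ F) : pairCl F x y (!c) ∉ F := by
  intro h2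
  obtain ⟨τ, s0, s1, s2⟩ := h3 _ (unit_pol_mem hx) _ h1 _ h2
  simp only [SatC, pairCl, Finset.mem_singleton, Finset.mem_insert, exists_eq_left,
    exists_eq_or_imp] at s0 s1 s2
  simp [s0] at s1 s2
  simp [s1] at s2

/-- `C` has the form `pairCl F x y c` with `x` a unit variable and `y` not a unit variable. -/
def IsPair (F : Finset Clause) (C : Clause) : Prop :=
  ∃ x ∈ unitVars F, ∃ y ∉ unitVars F, ∃ c, C = pairCl F x y c

/-- The clauses with at least two literals that are not of the form `IsPair`. -/
noncomputable def softClauses (F : Finset Clause) : Finset Clause :=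
  F.filter fun C => C.card ≠ 1 ∧ ¬ IsPair F C

lemma sum_filter_card_eq_one {F : Finset Clause} (h3 : Sat3 F) (φ : Clause → ℝ) :
    ∑ C ∈ F with C.card = 1, φ C = ∑ x ∈ unitVars F, φ {(x, pol F x)} := by
  symm
  refine Finset.sum_bij (fun x _ => {(x, pol F x)}) ?_ ?_ ?_ ?_
  · intro x hx
    simp [unit_pol_mem hx]
  · intro x _ y _ h
    simpa using congrArg (Finset.image Prod.fst) h
  · intro C hC
    obtain ⟨hC, h1⟩ := Finset.mem_filter.1 hC
    obtain ⟨⟨x, b⟩, rfl⟩ := Finset.card_eq_one.1 h1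
    exact ⟨x, mem_unitVars.2 ⟨b, hC⟩, by rw [h3.eq_pol hC]⟩
  · intros
    rfl

lemma pairCl_inj {F : Finset Clause} {x y x' y' : ℕ} {c c' : Bool} (hx : x ∈ unitVars F)
    (hy : y ∉ unitVars F) (hx' : x' ∈ unitVars F) (hy' : y' ∉ unitVars F)
    (h : pairCl F x y c = pairCl F x' y' c') : x = x' ∧ y = y' ∧ c = c' := by
  have h1 : (x, !pol F x) ∈ pairCl F x' y' c' := by rw [← h]; simp [pairCl]
  have h2 : (y, c) ∈ pairCl F x' y' c' := by rw [← h]; simp [pairCl]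
  simp only [pairCl, Finset.mem_insert, Finset.mem_singleton, Prod.mk.injEq] at h1 h2
  refine ⟨?_, ?_⟩
  · rcases h1 with h1 | h1
    · exact h1.1
    · exact absurd (h1.1 ▸ hx) hy'
  · rcases h2 with h2 | h2
    · exact absurd (h2.1 ▸ hx') hy
    · exact h2

lemma sum_filter_isPair (F : Finset Clause) (φ : Clause → ℝ) :
    ∑ C ∈ F with IsPair F C, φ C = ∑ x ∈ unitVars F, ∑ y ∈ vars F \ unitVars F, ∑ c : Bool,
      if pairCl F x y c ∈ F then φ (pairCl F x y c) else 0 := by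
  have e : (∑ x ∈ unitVars F, ∑ y ∈ vars F \ unitVars F, ∑ c : Bool,
      if pairCl F x y c ∈ F then φ (pairCl F x y c) else 0) =
      ∑ t ∈ unitVars F ×ˢ (vars F \ unitVars F) ×ˢ (Finset.univ : Finset Bool) with
        pairCl F t.1 t.2.1 t.2.2 ∈ F, φ (pairCl F t.1 t.2.1 t.2.2) := by
    simp only [Finset.sum_filter, Finset.sum_product]
  rw [e]
  symm
  refine Finset.sum_bij (fun t _ => pairCl F t.1 t.2.1 t.2.2) ?_ ?_ ?_ ?_
  · rintro ⟨x, y, c⟩ h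
    simp only [Finset.mem_filter, Finset.mem_product, Finset.mem_sdiff] at h ⊢
    exact ⟨h.2, x, h.1.1, y, h.1.2.1.2, c, rfl⟩
  · rintro ⟨x, y, c⟩ h ⟨x', y', c'⟩ h' e
    simp only [Finset.mem_filter, Finset.mem_product, Finset.mem_sdiff] at h h' e
    obtain ⟨rfl, rfl, rfl⟩ := pairCl_inj h.1.1 h.1.2.1.2 h'.1.1 h'.1.2.1.2 e
    rfl
  · intro C hC
    obtain ⟨hC, x, hx, y, hy, c, rfl⟩ := Finset.mem_filter.1 hC
    refine ⟨(x, y, c), ?_, rfl⟩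
    have hyV : y ∈ vars F := fst_mem_vars hC (l := (y, c)) (by simp [pairCl])
    simp [hx, hy, hyV, hC]
  · intros
    rfl

/-- The weight of a clause, counted as zero outside `F`. -/
noncomputable def clauseWt (F : Finset Clause) (w : Clause → ℕ) (C : Clause) : ℝ :=
  if C ∈ F then w C else 0

lemma clauseWt_nonneg (F : Finset Clause) (w : Clause → ℕ) (C : Clause) :
    0 ≤ clauseWt F w C := by
  unfold clauseWt
  split_ifs <;> positivity

lemma one_le_clauseWt {F : Finset Clause} {w : Clause → ℕ} (hw : ∀ C ∈ F, 0 < w C) {C : Clause}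
    (hC : C ∈ F) : 1 ≤ clauseWt F w C := by
  rw [clauseWt, if_pos hC]
  exact_mod_cast hw C hC

/-- The weight of the unit clause of `x`. -/
noncomputable def unitWt (F : Finset Clause) (w : Clause → ℕ) (x : ℕ) : ℝ :=
  clauseWt F w {(x, pol F x)}

/-- The weight of the pair clause on `x` and `y` in which `y` has polarity `pol F y`. -/
noncomputable def posWt (F : Finset Clause) (w : Clause → ℕ) (x y : ℕ) : ℝ :=
  clauseWt F w (pairCl F x y (pol F y))

/-- The weight of the pair clause on `x` and `y` in which `y` has polarity `!pol F y`. -/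
noncomputable def negWt (F : Finset Clause) (w : Clause → ℕ) (x y : ℕ) : ℝ :=
  clauseWt F w (pairCl F x y (!pol F y))

/-- The part of the loss coming from unit clauses and pair clauses. -/
noncomputable def hardLoss (F : Finset Clause) (w : Clause → ℕ) (p : ℕ → ℝ) : ℝ :=
  ∑ x ∈ unitVars F, unitWt F w x * (1 - p x) +
    ∑ x ∈ unitVars F, ∑ y ∈ vars F \ unitVars F,
      p x * (posWt F w x y * (1 - p y) + negWt F w x y * p y)

lemma sum_eq_unit_add_pair_add_soft (F : Finset Clause) (φ : Clause → ℝ) :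
    ∑ C ∈ F, φ C = ∑ C ∈ F with C.card = 1, φ C + ∑ C ∈ F with IsPair F C, φ C +
      ∑ C ∈ softClauses F, φ C := by
  simp only [softClauses, Finset.sum_filter, ← Finset.sum_add_distrib]
  refine Finset.sum_congr rfl fun C _ => ?_
  have hne : IsPair F C → C.card ≠ 1 := by
    rintro ⟨x, hx, y, hy, c, rfl⟩
    have : x ≠ y := fun h => hy (h ▸ hx)
    rw [pairCl, Finset.card_pair (by simp [this])]
    simp
  by_cases h1 : C.card = 1 <;> by_cases h2 : IsPair F C <;> simp [h1, h2]
  exact absurd h1 (hne h2)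

lemma sum_bool_pol (F : Finset Clause) (y : ℕ) (f : Bool → ℝ) :
    ∑ c : Bool, f c = f (pol F y) + f (!pol F y) := by
  rw [Fintype.sum_bool]
  cases pol F y <;> simp [add_comm]

lemma loss_eq {F : Finset Clause} (h3 : Sat3 F) (w : Clause → ℕ) (p : ℕ → ℝ) :
    loss F w (pol F) p = hardLoss F w p +
      ∑ C ∈ softClauses F, (w C : ℝ) * ∏ l ∈ C, litFail (pol F) p l := by
  rw [loss, sum_eq_unit_add_pair_add_soft, sum_filter_card_eq_one h3, sum_filter_isPair, hardLoss]
  congr 2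
  · refine Finset.sum_congr rfl fun x hx => ?_
    simp [unitWt, clauseWt, unit_pol_mem hx, litFail]
  · refine Finset.sum_congr rfl fun x hx => Finset.sum_congr rfl fun y hy => ?_
    have hxy : x ≠ y := fun h => (Finset.mem_sdiff.1 hy).2 (h ▸ hx)
    have e : ∀ c, ∏ l ∈ pairCl F x y c, litFail (pol F) p l =
        p x * if c = pol F y then 1 - p y else p y := by
      intro c
      rw [pairCl, Finset.prod_pair (by simp [hxy])]
      simp [litFail]
    rw [sum_bool_pol F y]
    simp only [e, posWt, negWt, clauseWt]
    split_ifs <;> simp_all <;> ring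

lemma wt_eq {F : Finset Clause} (h3 : Sat3 F) (w : Clause → ℕ) :
    (wt w F : ℝ) = ∑ x ∈ unitVars F, unitWt F w x +
      ∑ x ∈ unitVars F, ∑ y ∈ vars F \ unitVars F, (posWt F w x y + negWt F w x y) +
      wt w (softClauses F) := by
  rw [wt, wt, Nat.cast_sum, Nat.cast_sum, sum_eq_unit_add_pair_add_soft,
    sum_filter_card_eq_one h3, sum_filter_isPair]
  congr 2
  · refine Finset.sum_congr rfl fun x hx => ?_
    simp [unitWt, clauseWt, unit_pol_mem hx]
  · refine Finset.sum_congr rfl fun x hx => Finset.sum_congr rfl fun y hy => ?_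
    rw [sum_bool_pol F y]
    simp only [posWt, negWt, clauseWt]

/-- A bound assigned to a literal: `P` for the unit literal of a unit variable, `M` for its
negation, and `N` for literals of other variables. -/
noncomputable def litBound (F : Finset Clause) (P M N : ℝ) (l : ℕ × Bool) : ℝ :=
  if l.1 ∈ unitVars F then if l.2 = pol F l.1 then P else M else N

lemma prod_le_prod_subset {ι : Type*} {S C : Finset ι} (h : S ⊆ C) {f : ι → ℝ}
    (h0 : ∀ i, 0 ≤ f i) (h1 : ∀ i, f i ≤ 1) : ∏ i ∈ C, f i ≤ ∏ i ∈ S, f i := by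
  rw [← Finset.prod_sdiff h]
  exact mul_le_of_le_one_left (Finset.prod_nonneg fun i _ => h0 i)
    (Finset.prod_le_one (fun i _ => h0 i) fun i _ => h1 i)

lemma prod_litBound_le {F : Finset Clause} (hF : IsCNF F) (h3 : Sat3 F) {C : Clause}
    (hC : C ∈ softClauses F) {P M N B : ℝ} (hP : 0 ≤ P ∧ P ≤ 1) (hM : 0 ≤ M ∧ M ≤ 1)
    (hN : 0 ≤ N ∧ N ≤ 1) (hPP : P * P ≤ B) (hPM : P * M ≤ B) (hPN : P * N ≤ B)
    (hNN : N * N ≤ B) (hNMM : N * (M * M) ≤ B) (hMMM : M * (M * M) ≤ B) :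
    ∏ l ∈ C, litBound F P M N l ≤ B := by
  obtain ⟨hCF, hcard, hpair⟩ := Finset.mem_filter.1 hC
  have hb : ∀ l, 0 ≤ litBound F P M N l ∧ litBound F P M N l ≤ 1 := by
    intro l
    unfold litBound
    split_ifs <;> assumption
  have h2 : 2 ≤ C.card := by
    have := (hF C hCF).1.card_pos
    omega
  have two : ∀ l ∈ C, ∀ m ∈ C, l ≠ m → ∏ i ∈ C, litBound F P M N i ≤
      litBound F P M N l * litBound F P M N m := by
    intro l hl m hm hlm
    rw [← Finset.prod_pair hlm]
    exact prod_le_prod_subset (by simp [Finset.insert_subset_iff, hl, hm])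
      (fun i => (hb i).1) fun i => (hb i).2
  have three : ∀ l ∈ C, ∀ m ∈ C, ∀ k ∈ C, l ≠ m → l ≠ k → m ≠ k →
      ∏ i ∈ C, litBound F P M N i ≤
      litBound F P M N l * (litBound F P M N m * litBound F P M N k) := by
    intro l hl m hm k hk hlm hlk hmk
    rw [← Finset.prod_pair hmk, ← Finset.prod_insert (by simp [hlm, hlk])]
    exact prod_le_prod_subset (by simp [Finset.insert_subset_iff, hl, hm, hk])
      (fun i => (hb i).1) fun i => (hb i).2
  by_cases hPl : ∃ l ∈ C, l.1 ∈ unitVars F ∧ l.2 = pol F l.1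
  · obtain ⟨l, hl, hl1, hl2⟩ := hPl
    obtain ⟨m, hm, hml⟩ := Finset.exists_mem_ne h2 l
    refine (two l hl m hm hml.symm).trans ?_
    unfold litBound
    simp only [hl1, hl2, if_true]
    split_ifs <;> assumption
  push Not at hPl
  have hMl : ∀ l ∈ C, l.1 ∈ unitVars F → litBound F P M N l = M := fun l hl hu => by
    simp [litBound, hu, hPl l hl hu]
  by_cases hNl : ∃ l ∈ C, l.1 ∉ unitVars F
  · obtain ⟨l, hl, hl1⟩ := hNl
    have hlN : litBound F P M N l = N := by simp [litBound, hl1]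
    by_cases hNm : ∃ m ∈ C, m ≠ l ∧ m.1 ∉ unitVars F
    · obtain ⟨m, hm, hml, hm1⟩ := hNm
      have hmN : litBound F P M N m = N := by simp [litBound, hm1]
      have := two l hl m hm hml.symm
      rw [hlN, hmN] at this
      exact this.trans hNN
    · push Not at hNm
      obtain ⟨m, hm, hml⟩ := Finset.exists_mem_ne h2 l
      have h3' : ∃ k ∈ C, k ≠ l ∧ k ≠ m := by
        by_contra! hcon
        refine hpair ⟨m.1, hNm m hm hml, l.1, hl1, l.2, ?_⟩
        have hm2 : m.2 = !pol F m.1 := by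
          have := hPl m hm (hNm m hm hml)
          revert this
          cases m.2 <;> cases pol F m.1 <;> simp
        ext k
        rw [pairCl, ← hm2]
        constructor
        · intro hk
          by_cases hkl : k = l
          · simp [hkl]
          · simp [hcon k hk hkl]
        · simp only [Finset.mem_insert, Finset.mem_singleton]
          rintro (rfl | rfl)
          · exact hm
          · exact hl
      obtain ⟨k, hk, hkl, hkm⟩ := h3'
      have := three l hl m hm k hk hml.symm hkl.symm hkm.symm
      rw [hlN, hMl m hm (hNm m hm hml), hMl k hk (hNm k hk hkl)] at this
      exact this.trans hNMM
  · push Not at hNl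
    have hc3 : 2 < C.card := by
      by_contra hlt
      obtain ⟨l, m, hlm, rfl⟩ := Finset.card_eq_two.1 (show C.card = 2 by omega)
      have hl := hNl l (by simp)
      have hm := hNl m (by simp)
      obtain ⟨τ, s1, s2, s3⟩ := h3 _ (unit_pol_mem hl) _ (unit_pol_mem hm) _ hCF
      simp only [SatC, Finset.mem_singleton, Finset.mem_insert, exists_eq_left,
        exists_eq_or_imp] at s1 s2 s3
      rcases s3 with s | s
      · exact hPl l (by simp) hl (s ▸ s1)
      · exact hPl m (by simp) hm (s ▸ s2)
    obtain ⟨l, m, k, hl, hm, hk, hlm, hlk, hmk⟩ := Finset.two_lt_card_iff.1 hc3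
    have := three l hl m hm k hk hlm hlk hmk
    rw [hMl l hl (hNl l hl), hMl m hm (hNl m hm), hMl k hk (hNl k hk)] at this
    exact this.trans hMMM

/-- If no fractional assignment has loss below `K`, averaging over a random family of fractional
assignments bounds `K`. -/
lemma le_avg_hardLoss_add {F : Finset Clause} (hF : IsCNF F) (h3 : Sat3 F) {w : Clause → ℕ} {K : ℝ}
    (hK : ∀ p : ℕ → ℝ, (∀ v, 0 ≤ p v ∧ p v ≤ 1) → K ≤ loss F w (pol F) p)
    (p : Finset ℕ → ℕ → ℝ) (hp : ∀ A v, 0 ≤ p A v ∧ p A v ≤ 1) (g : ℕ × Bool → Prop → ℝ)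
    (hg : ∀ A l, litFail (pol F) (p A) l ≤ g l (l.1 ∈ A)) {P M N B : ℝ}
    (hgq : ∀ l, (g l False + g l True) / 2 = litBound F P M N l)
    (hB : ∀ C ∈ softClauses F, ∏ l ∈ C, litBound F P M N l ≤ B) :
    K ≤ avg (vars F) (fun A => hardLoss F w (p A)) + B * wt w (softClauses F) := by
  rw [← avg_const (vars F) K]
  have h1 : avg (vars F) (fun _ => K) ≤ avg (vars F) (fun A => hardLoss F w (p A) +
      ∑ C ∈ softClauses F, (w C : ℝ) * ∏ l ∈ C, g l (l.1 ∈ A)) := by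
    refine avg_mono _ fun A => (hK _ (hp A)).trans ?_
    rw [loss_eq h3]
    gcongr with C hC l hl
    · exact fun l _ => (litFail_mem (hp A l.1)).1
    · exact hg A l
  refine h1.trans ?_
  rw [avg_add, avg_sum, wt, Nat.cast_sum, Finset.mul_sum]
  gcongr with C hC
  have hCF := (Finset.mem_filter.1 hC).1
  rw [avg_mul_left, avg_prod _ _ _ (fun l hl => fst_mem_vars hCF hl) (hF.injOn_fst hCF),
    Finset.prod_congr rfl fun l _ => hgq l, mul_comm]
  gcongr
  exact hB C hC

lemma le_sub_soft {F : Finset Clause} (hF : IsCNF F) (h3 : Sat3 F) {w : Clause → ℕ} {K : ℝ}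
    (hK : ∀ p : ℕ → ℝ, (∀ v, 0 ≤ p v ∧ p v ≤ 1) → K ≤ loss F w (pol F) p) :
    K ≤ (wt w F : ℝ) / 3 - wt w (softClauses F) / 27 := by
  have h := le_avg_hardLoss_add hF h3 hK (fun _ v => if v ∈ unitVars F then 2 / 3 else 1 / 2)
    (fun _ v => by split_ifs <;> norm_num)
    (fun l _ => litBound F (1 / 3) (2 / 3) (1 / 2) l)
    (fun A l => by simp only [litFail, litBound]; split_ifs <;> norm_num)
    (fun l => by ring)
    (fun C hC => prod_litBound_le (B := 8 / 27) hF h3 hC (by norm_num) (by norm_num) (by norm_num)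
      (by norm_num) (by norm_num) (by norm_num) (by norm_num) (by norm_num) (by norm_num))
  rw [avg_const] at h
  have e : hardLoss F w (fun v => if v ∈ unitVars F then 2 / 3 else 1 / 2) =
      (∑ x ∈ unitVars F, unitWt F w x +
      ∑ x ∈ unitVars F, ∑ y ∈ vars F \ unitVars F, (posWt F w x y + negWt F w x y)) / 3 := by
    rw [hardLoss, add_div, Finset.sum_div, Finset.sum_div]
    congr 1
    · refine Finset.sum_congr rfl fun x hx => ?_
      rw [if_pos hx]
      ring
    · refine Finset.sum_congr rfl fun x hx => ?_
      rw [Finset.sum_div]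
      refine Finset.sum_congr rfl fun y hy => ?_
      rw [if_pos hx, if_neg (Finset.mem_sdiff.1 hy).2]
      ring
  rw [e] at h
  rw [wt_eq h3]
  linarith

/-- The sign of a real number, with value `1` at zero. -/
noncomputable def sgn (t : ℝ) : ℝ := if 0 ≤ t then 1 else -1

lemma sgn_mul_self (t : ℝ) : sgn t * t = |t| := by
  unfold sgn
  split_ifs with h
  · rw [abs_of_nonneg h, one_mul]
  · rw [abs_of_neg (not_le.1 h), neg_one_mul]

lemma sgn_mem (t : ℝ) : -1 ≤ sgn t ∧ sgn t ≤ 1 := by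
  unfold sgn
  split_ifs <;> norm_num

lemma one_le_abs_posWt_sub_negWt {F : Finset Clause} (h3 : Sat3 F) {w : Clause → ℕ}
    (hw : ∀ C ∈ F, 0 < w C) {x y : ℕ} {c : Bool} (hx : x ∈ unitVars F)
    (h : pairCl F x y c ∈ F) : 1 ≤ |posWt F w x y - negWt F w x y| := by
  have h' := h3.not_pairCl_both hx h
  have h1 := one_le_clauseWt hw h
  have h2 : clauseWt F w (pairCl F x y !c) = 0 := if_neg h'
  unfold posWt negWt
  by_cases hc : c = pol F y
  · subst hc
    rw [h2, sub_zero]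
    exact h1.trans (le_abs_self _)
  · obtain rfl : c = !pol F y := by cases c <;> cases hp : pol F y <;> simp_all
    rw [Bool.not_not] at h2
    rw [h2, zero_sub, abs_neg]
    exact h1.trans (le_abs_self _)

/-- The weight of pair clauses on `x` satisfied only through `x` when the other variables take their
preferred polarity exactly on `A`. -/
noncomputable def pairLoad (F : Finset Clause) (w : Clause → ℕ) (A : Finset ℕ) (x : ℕ) : ℝ :=
  ∑ y ∈ vars F \ unitVars F, if y ∈ A then negWt F w x y else posWt F w x y

lemma avg_pairLoad (F : Finset Clause) (w : Clause → ℕ) (x : ℕ) :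
    avg (vars F) (fun A => pairLoad F w A x) =
      ∑ y ∈ vars F \ unitVars F, (posWt F w x y + negWt F w x y) / 2 := by
  unfold pairLoad
  rw [avg_sum]
  refine Finset.sum_congr rfl fun y hy => ?_
  rw [avg_coin (Finset.mem_sdiff.1 hy).1, add_comm]

lemma half_le_avg_abs_unitWt_sub {F : Finset Clause} (h3 : Sat3 F) {w : Clause → ℕ}
    (hw : ∀ C ∈ F, 0 < w C) {x : ℕ} (hx : x ∈ unitVars F) :
    1 / 2 ≤ avg (vars F) (fun A => |unitWt F w x - pairLoad F w A x|) := by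
  by_cases h : ∃ y ∈ vars F \ unitVars F, ∃ c, pairCl F x y c ∈ F
  · obtain ⟨y, hy, c, hc⟩ := h
    refine le_avg_abs (Finset.mem_sdiff.1 hy).1 _ 1 fun A =>
      (one_le_abs_posWt_sub_negWt h3 hw hx hc).trans ?_
    rw [← abs_neg]
    apply le_of_eq
    congr 1
    have e : ∀ z ∈ (vars F \ unitVars F).erase y,
        (if z ∈ A.erase y then negWt F w x z else posWt F w x z) =
          if z ∈ insert y A then negWt F w x z else posWt F w x z := by
      intro z hz
      simp [Finset.ne_of_mem_erase hz]
    unfold pairLoad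
    rw [← Finset.add_sum_erase _ _ hy, ← Finset.add_sum_erase _ _ hy, Finset.sum_congr rfl e]
    simp
  · push Not at h
    have e : ∀ A, pairLoad F w A x = 0 := fun A => Finset.sum_eq_zero fun y hy => by
      simp [posWt, negWt, clauseWt, h y hy]
    have h1 : 1 ≤ unitWt F w x := one_le_clauseWt hw (unit_pol_mem hx)
    simp only [e, sub_zero, avg_const]
    exact le_trans (by linarith) (le_abs_self _)

lemma le_sub_card_unitVars {F : Finset Clause} (hF : IsCNF F) (h3 : Sat3 F) {w : Clause → ℕ}
    (hw : ∀ C ∈ F, 0 < w C) {K : ℝ}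
    (hK : ∀ p : ℕ → ℝ, (∀ v, 0 ≤ p v ∧ p v ≤ 1) → K ≤ loss F w (pol F) p) :
    K ≤ (wt w F : ℝ) / 3 - (unitVars F).card / 80 := by
  set k : Finset ℕ → ℕ → ℝ := fun A x => unitWt F w x - pairLoad F w A x with hk
  have h := le_avg_hardLoss_add hF h3 hK
    (fun A v => if v ∈ unitVars F then 2 / 3 + sgn (k A v) / 40 else if v ∈ A then 1 else 0)
    (fun A v => by
      have := sgn_mem (k A v)
      split_ifs <;> constructor <;> linarith)
    (fun l c => if l.1 ∈ unitVars F then litBound F (43 / 120) (83 / 120) 0 l else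
      if l.2 = pol F l.1 then if c then 0 else 1 else if c then 1 else 0)
    (fun A l => by
      have := sgn_mem (k A l.1)
      simp only [litFail, litBound]
      split_ifs <;> linarith)
    (P := 43 / 120) (M := 83 / 120) (N := 1 / 2)
    (fun l => by
      unfold litBound
      split_ifs <;> simp_all)
    (fun C hC => prod_litBound_le (B := 1 / 3) hF h3 hC (by norm_num) (by norm_num) (by norm_num)
      (by norm_num) (by norm_num) (by norm_num) (by norm_num) (by norm_num) (by norm_num))
  have e : ∀ A, hardLoss F w
      (fun v => if v ∈ unitVars F then 2 / 3 + sgn (k A v) / 40 else if v ∈ A then 1 else 0) =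
      ∑ x ∈ unitVars F, (unitWt F w x / 3 + (2 / 3 * pairLoad F w A x + (-1 / 40) * |k A x|)) := by
    intro A
    rw [hardLoss, ← Finset.sum_add_distrib]
    refine Finset.sum_congr rfl fun x hx => ?_
    have e2 : pairLoad F w A x = ∑ y ∈ vars F \ unitVars F,
        (posWt F w x y * (1 - if y ∈ unitVars F then 2 / 3 + sgn (k A y) / 40 else
          if y ∈ A then 1 else 0) +
        negWt F w x y * if y ∈ unitVars F then 2 / 3 + sgn (k A y) / 40 else
          if y ∈ A then 1 else 0) := by
      refine Finset.sum_congr rfl fun y hy => ?_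
      rw [if_neg (Finset.mem_sdiff.1 hy).2]
      split_ifs <;> ring
    rw [← Finset.mul_sum, ← e2, if_pos hx, ← sgn_mul_self]
    simp only [hk]
    ring
  simp only [e, avg_sum, avg_add, avg_mul_left, avg_const, avg_pairLoad] at h
  have hsum : ∑ x ∈ unitVars F, (unitWt F w x / 3 +
      (2 / 3 * ∑ y ∈ vars F \ unitVars F, (posWt F w x y + negWt F w x y) / 2 +
        (-1 / 40) * avg (vars F) fun A => |k A x|)) ≤
      ∑ x ∈ unitVars F, (unitWt F w x / 3 +
      ((∑ y ∈ vars F \ unitVars F, (posWt F w x y + negWt F w x y)) / 3 - 1 / 80)) := by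
    refine Finset.sum_le_sum fun x hx => ?_
    have := half_le_avg_abs_unitWt_sub h3 hw hx
    rw [← Finset.sum_div]
    simp only [hk]
    linarith
  simp only [Finset.sum_add_distrib, Finset.sum_sub_distrib, ← Finset.sum_div, Finset.sum_const,
    nsmul_eq_mul] at hsum h
  rw [wt_eq h3]
  simp only [Finset.sum_add_distrib]
  linarith

/-- The non-unit variables occurring in a pair clause. -/
noncomputable def pairVars (F : Finset Clause) : Finset ℕ :=
  (vars F \ unitVars F).filter fun y => ∃ x ∈ unitVars F, ∃ c, pairCl F x y c ∈ F

/-- The advantage of giving `y` its preferred polarity when unit variables are true with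
probability `1` on `A` and `1 / 3` elsewhere. -/
noncomputable def pairBias (F : Finset Clause) (w : Clause → ℕ) (A : Finset ℕ) (y : ℕ) : ℝ :=
  ∑ x ∈ unitVars F, (if x ∈ A then 1 else 1 / 3) * (posWt F w x y - negWt F w x y)

lemma third_le_avg_abs_pairBias {F : Finset Clause} (h3 : Sat3 F) {w : Clause → ℕ}
    (hw : ∀ C ∈ F, 0 < w C) {y : ℕ} (hy : y ∈ pairVars F) :
    1 / 3 ≤ avg (vars F) (fun A => |pairBias F w A y|) := by
  obtain ⟨-, x, hx, c, hc⟩ := Finset.mem_filter.1 hy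
  have h := le_avg_abs (unitVars_subset_vars F hx) (fun A => pairBias F w A y) (2 / 3) fun A => by
    have e : ∀ z ∈ (unitVars F).erase x,
        (if z ∈ A.erase x then (1 : ℝ) else 1 / 3) * (posWt F w z y - negWt F w z y) =
          (if z ∈ insert x A then 1 else 1 / 3) * (posWt F w z y - negWt F w z y) := by
      intro z hz
      simp [Finset.ne_of_mem_erase hz]
    have e2 : pairBias F w (A.erase x) y - pairBias F w (insert x A) y =
        -(2 / 3) * (posWt F w x y - negWt F w x y) := by
      unfold pairBias
      rw [← Finset.add_sum_erase _ _ hx, ← Finset.add_sum_erase _ _ hx, Finset.sum_congr rfl e]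
      simp
      ring
    have h1 := one_le_abs_posWt_sub_negWt h3 hw hx hc
    rw [e2, abs_mul, abs_neg, abs_of_pos (by norm_num : (0 : ℝ) < 2 / 3)]
    linarith
  linarith

lemma le_sub_card_pairVars {F : Finset Clause} (hF : IsCNF F) (h3 : Sat3 F) {w : Clause → ℕ}
    (hw : ∀ C ∈ F, 0 < w C) {K : ℝ}
    (hK : ∀ p : ℕ → ℝ, (∀ v, 0 ≤ p v ∧ p v ≤ 1) → K ≤ loss F w (pol F) p) :
    K ≤ (wt w F : ℝ) / 3 - (pairVars F).card / 42 := by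
  set m : Finset ℕ → ℕ → ℝ := pairBias F w with hm
  have h := le_avg_hardLoss_add hF h3 hK
    (fun A v => if v ∈ unitVars F then if v ∈ A then 1 else 1 / 3 else 1 / 2 + sgn (m A v) / 14)
    (fun A v => by
      have := sgn_mem (m A v)
      split_ifs <;> constructor <;> linarith)
    (fun l c => if l.1 ∈ unitVars F then
      if l.2 = pol F l.1 then if c then 0 else 2 / 3 else if c then 1 else 1 / 3 else 4 / 7)
    (fun A l => by
      have := sgn_mem (m A l.1)
      simp only [litFail]
      split_ifs <;> linarith)
    (P := 1 / 3) (M := 2 / 3) (N := 4 / 7)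
    (fun l => by
      unfold litBound
      split_ifs <;> norm_num <;> simp_all)
    (fun C hC => prod_litBound_le (B := 1 / 3) hF h3 hC (by norm_num) (by norm_num) (by norm_num)
      (by norm_num) (by norm_num) (by norm_num) (by norm_num) (by norm_num) (by norm_num))
  have e : ∀ A, hardLoss F w
      (fun v => if v ∈ unitVars F then if v ∈ A then 1 else 1 / 3 else
        1 / 2 + sgn (m A v) / 14) =
      ∑ x ∈ unitVars F, unitWt F w x * (if x ∈ A then 0 else 2 / 3) +
      (∑ x ∈ unitVars F, (∑ y ∈ vars F \ unitVars F, (posWt F w x y + negWt F w x y) / 2) *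
        (if x ∈ A then 1 else 1 / 3) +
      ∑ y ∈ vars F \ unitVars F, (-1 / 14) * |m A y|) := by
    intro A
    have e1 : ∑ y ∈ vars F \ unitVars F, (-1 / 14) * |m A y| = ∑ x ∈ unitVars F,
        ∑ y ∈ vars F \ unitVars F, (-1 / 14) * sgn (m A y) *
          ((if x ∈ A then 1 else 1 / 3) * (posWt F w x y - negWt F w x y)) := by
      rw [Finset.sum_comm]
      refine Finset.sum_congr rfl fun y _ => ?_
      rw [← Finset.mul_sum, ← sgn_mul_self, mul_assoc]
      rfl
    rw [hardLoss, e1]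
    congr 1
    · refine Finset.sum_congr rfl fun x hx => ?_
      rw [if_pos hx]
      split_ifs <;> ring
    · rw [← Finset.sum_add_distrib]
      refine Finset.sum_congr rfl fun x hx => ?_
      rw [Finset.sum_mul, ← Finset.sum_add_distrib]
      refine Finset.sum_congr rfl fun y hy => ?_
      rw [if_pos hx, if_neg (Finset.mem_sdiff.1 hy).2]
      ring
  simp only [e, avg_sum, avg_add, avg_mul_left] at h
  have h1 : ∑ x ∈ unitVars F, unitWt F w x * avg (vars F) (fun A => if x ∈ A then 0 else 2 / 3) =
      (∑ x ∈ unitVars F, unitWt F w x) / 3 := by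
    rw [Finset.sum_div]
    refine Finset.sum_congr rfl fun x hx => ?_
    rw [avg_coin (unitVars_subset_vars F hx)]
    ring
  have h2 : ∑ x ∈ unitVars F, (∑ y ∈ vars F \ unitVars F, (posWt F w x y + negWt F w x y) / 2) *
      avg (vars F) (fun A => if x ∈ A then 1 else 1 / 3) =
      (∑ x ∈ unitVars F, ∑ y ∈ vars F \ unitVars F, (posWt F w x y + negWt F w x y)) / 3 := by
    rw [Finset.sum_div]
    refine Finset.sum_congr rfl fun x hx => ?_
    rw [avg_coin (unitVars_subset_vars F hx), ← Finset.sum_div]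
    ring
  have h4 : ∑ y ∈ vars F \ unitVars F, (-1 / 14) * avg (vars F) (fun A => |m A y|) ≤
      -((pairVars F).card / 42 : ℝ) := by
    rw [← Finset.mul_sum]
    have hle : ∑ y ∈ pairVars F, (1 / 3 : ℝ) ≤
        ∑ y ∈ vars F \ unitVars F, avg (vars F) (fun A => |m A y|) := by
      refine (Finset.sum_le_sum fun y hy => third_le_avg_abs_pairBias h3 hw hy).trans ?_
      refine Finset.sum_le_sum_of_subset_of_nonneg (Finset.filter_subset _ _) fun y _ _ => ?_
      rw [← avg_const (vars F) 0]
      exact avg_mono _ fun A => abs_nonneg _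
    rw [Finset.sum_const, nsmul_eq_mul] at hle
    linarith
  rw [h1, h2] at h
  rw [wt_eq h3]
  linarith

lemma card_le_wt_softClauses {F : Finset Clause} {w : Clause → ℕ} (hexp : Expanding F w) :
    ((vars F \ unitVars F) \ pairVars F).card ≤ wt w (softClauses F) := by
  refine (hexp _ (Finset.sdiff_subset.trans Finset.sdiff_subset)).trans ?_
  refine Finset.sum_le_sum_of_subset fun C hC => ?_
  obtain ⟨hCF, l, hl, hlY⟩ := Finset.mem_filter.1 hC
  obtain ⟨hlN, hlp⟩ := Finset.mem_sdiff.1 hlY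
  have hlu := (Finset.mem_sdiff.1 hlN).2
  refine Finset.mem_filter.2 ⟨hCF, fun h1 => ?_, ?_⟩
  · obtain ⟨m, rfl⟩ := Finset.card_eq_one.1 h1
    obtain rfl := Finset.mem_singleton.1 hl
    exact hlu (mem_unitVars.2 ⟨l.2, hCF⟩)
  · rintro ⟨x, hx, y, hy, c, rfl⟩
    rcases Finset.mem_insert.1 hl with rfl | hl
    · exact hlu hx
    · obtain rfl := Finset.mem_singleton.1 hl
      exact hlp (Finset.mem_filter.2 ⟨hlN, x, hx, c, hCF⟩)

theorem stmt18 (F : Finset Clause) (w : Clause → ℕ)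
    (hF : IsCNF F) (hw : ∀ C ∈ F, 0 < w C) (h3 : Sat3 F) (hexp : Expanding F w) :
    ∃ τ : ℕ → Bool,
      (2:ℝ)/3 * wt w F + (2:ℝ)/453 * ((vars F).card : ℝ) ≤ (satWt w τ F : ℝ) := by
  rcases F.eq_empty_or_nonempty with rfl | ⟨C, hC⟩
  · exact ⟨fun _ => true, by simp [wt, vars]⟩
  by_contra! hcon
  have hK : ∀ p : ℕ → ℝ, (∀ v, 0 ≤ p v ∧ p v ≤ 1) →
      (wt w F : ℝ) / 3 - 2 / 453 * (vars F).card ≤ loss F w (pol F) p := by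
    intro p hp
    obtain ⟨τ, hτ⟩ := exists_satWt_ge hF w (pol F) p hp
    linarith [hcon τ]
  have hsoft := le_sub_soft hF h3 hK
  have hunit := le_sub_card_unitVars hF h3 hw hK
  have hpair := le_sub_card_pairVars hF h3 hw hK
  have hrest : (((vars F \ unitVars F) \ pairVars F).card : ℝ) ≤ wt w (softClauses F) := by
    exact_mod_cast card_le_wt_softClauses hexp
  have hcard : ((vars F).card : ℝ) = (unitVars F).card + (pairVars F).card +
      ((vars F \ unitVars F) \ pairVars F).card := by
    have h1 := Finset.card_sdiff_add_card_eq_card (unitVars_subset_vars F)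
    have hsub : pairVars F ⊆ vars F \ unitVars F := Finset.filter_subset _ _
    have h2 := Finset.card_sdiff_add_card_eq_card hsub
    have : (vars F).card = (unitVars F).card + (pairVars F).card +
      ((vars F \ unitVars F) \ pairVars F).card := by omega
    exact_mod_cast this
  have hpos : (0 : ℝ) < (vars F).card := by
    obtain ⟨l, hl⟩ := (hF C hC).1
    exact_mod_cast Finset.card_pos.2 ⟨_, fst_mem_vars hC hl⟩
  linarith
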